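/- arXiv:math/0301084 — 2 statements merged into one kernel-verified Lean document; each statement's English description precedes it below -/
import Mathlib

section
/- The subalgebra of F_2[x,y,z,w] consisting of the polynomials invariant under every element of GL^3_1(F_2) equals the F_2-subalgebra generated by b_4, b_6, b_7, b_8; moreover b_4, b_6, b_7, b_8 are algebraically independent over F_2. -/
noncomputable section

open MvPolynomial

/-- The set of `𝔽₂`-linear combinations (i.e. subset sums) of the family `v`. -/
def spanF2 {R : Type*} [CommRing R] {n : ℕ} (v : Fin n → R) : Finset R :=
  letI := Classical.decEq R
  Finset.image (fun s : Finset (Fin n) => ∑ j ∈ s, v j) Finset.univ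

/-- The Dickson invariant `D_i(v₁, …, vₙ)`: the `(2^n - 2^(n-i))`-th elementary symmetric
polynomial of the `2^n` elements of the `𝔽₂`-linear span of `v₁, …, vₙ`. -/
def dickson {R : Type*} [CommRing R] {n : ℕ} (v : Fin n → R) (i : ℕ) : R :=
  (spanF2 v).val.esymm (2 ^ n - 2 ^ (n - i))

/-- The product `∏_{α ∈ span_{𝔽₂}(v)} (w + α)`. -/
def prodAdd {R : Type*} [CommRing R] {n : ℕ} (v : Fin n → R) (w : R) : R :=
  ∏ α ∈ spanF2 v, (w + α)

/-- The polynomial ring `𝔽₂[x, y, z, w]`. -/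
abbrev R4 := MvPolynomial (Fin 4) (ZMod 2)

def xP : R4 := X 0
def yP : R4 := X 1
def zP : R4 := X 2
def wP : R4 := X 3

def a8 : R4 := dickson ![xP, yP, zP, wP] 1
def a12 : R4 := dickson ![xP, yP, zP, wP] 2
def a14 : R4 := dickson ![xP, yP, zP, wP] 3
def a15 : R4 := dickson ![xP, yP, zP, wP] 4

def b4 : R4 := dickson ![xP, yP, zP] 1
def b6 : R4 := dickson ![xP, yP, zP] 2
def b7 : R4 := dickson ![xP, yP, zP] 3
def b8 : R4 := prodAdd ![xP, yP, zP] wP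

def c2 : R4 := dickson ![xP, yP] 1
def c3 : R4 := dickson ![xP, yP] 2
def c4' : R4 := prodAdd ![xP, yP] zP
def c4'' : R4 := prodAdd ![xP, yP] wP

/-- The action of a matrix `g` on `𝔽₂[x,y,z,w]`, sending the variable `xᵢ` to
`∑ⱼ gᵢⱼ xⱼ`. -/
def matAct (g : Matrix (Fin 4) (Fin 4) (ZMod 2)) : R4 →ₐ[ZMod 2] R4 :=
  aeval (fun i => ∑ j, C (g i j) * X j)

/-- Membership in the subgroup `GL³₁(𝔽₂) ≤ GL₄(𝔽₂)` of matrices `g` with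
`g₁₄ = g₂₄ = g₃₄ = 0` (in one-based indexing). -/
def memGL31 (g : GL (Fin 4) (ZMod 2)) : Prop :=
  (g : Matrix (Fin 4) (Fin 4) (ZMod 2)) 0 3 = 0 ∧
  (g : Matrix (Fin 4) (Fin 4) (ZMod 2)) 1 3 = 0 ∧
  (g : Matrix (Fin 4) (Fin 4) (ZMod 2)) 2 3 = 0

/-
Let `q` be the cardinality of the ground field `K`, and let `F` be the polynomial whose roots are
the `K`-linear combinations of `x₁, …, xₙ`. Only the exponents `q ^ i` occur in `F`, so `F` is
additive and `F(T) - F(w)` is the product of the factors `T - (w + α)`, with `α` in the span of the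
`xᵢ`. The coefficients of `F` are the Dickson invariants up to sign. Let `A` be the algebra
generated by them and by `F(w)`, the product of the `w + α`. The roots `w + α` generate the
polynomial ring `B` in `x₁, …, xₙ, w`, so `B` is integral over `A` and `Frac B` is the splitting
field of the separable polynomial `F(T) - F(w)` over `Frac A`, hence Galois. An automorphism of `B`
over `A` permutes both the roots of `F` and those of `F(T) - F(w)`, which makes it an affine
substitution. By integrality the `n + 1` generators of `A` form a transcendence basis, so `A` is a
polynomial ring, hence integrally closed, and every invariant of `B`, being integral over `A` and in
`Frac A`, lies in `A`.
-/

open scoped Polynomial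

section Linearized

variable (K R : Type*) [Fintype K] [CommRing R]

/-- The linearized polynomials `∑ i, a i * X ^ q ^ i`, where `q` is the cardinality of the finite
field `K`. They are the polynomials inducing a `K`-linear map on every algebra. -/
def linearizedPolynomials : Submodule R R[X] :=
  Submodule.span R (Set.range fun i : ℕ ↦ Polynomial.X ^ Fintype.card K ^ i)

variable {K R}

theorem coeff_eq_zero_of_mem_linearizedPolynomials {P : R[X]} (hP : P ∈ linearizedPolynomials K R)
    {k : ℕ} (hk : ∀ i, k ≠ Fintype.card K ^ i) : P.coeff k = 0 := by
  suffices linearizedPolynomials K R ≤ LinearMap.ker (Polynomial.lcoeff R k) from this hP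
  refine Submodule.span_le.mpr ?_
  rintro _ ⟨i, rfl⟩
  simp [Polynomial.coeff_X_pow, hk i]

variable [Field K]

theorem exists_linearMap_eq_aeval_of_mem_linearizedPolynomials {P : R[X]}
    (hP : P ∈ linearizedPolynomials K R) (S : Type*) [CommRing S] [Algebra R S] [Algebra K S] :
    ∃ f : S →ₗ[K] S, ∀ s, f s = Polynomial.aeval s P := by
  induction hP using Submodule.span_induction with
  | mem P h =>
    obtain ⟨i, rfl⟩ := h
    refine ⟨(FiniteField.frobeniusAlgHom K S ^ i).toLinearMap, fun s ↦ ?_⟩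
    rw [AlgHom.toLinearMap_apply, AlgHom.coe_pow, FiniteField.coe_frobeniusAlgHom, pow_iterate]
    simp
  | zero => exact ⟨0, by simp⟩
  | add P Q _ _ ihP ihQ =>
    obtain ⟨⟨f, hf⟩, g, hg⟩ := And.intro ihP ihQ
    exact ⟨f + g, by simp [hf, hg]⟩
  | smul r P _ ih =>
    obtain ⟨f, hf⟩ := ih
    exact ⟨LinearMap.mulLeft K (algebraMap R S r) ∘ₗ f, by simp [hf, Algebra.smul_def]⟩

theorem comp_X_sub_C_of_mem_linearizedPolynomials [Algebra K R] {P : R[X]}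
    (hP : P ∈ linearizedPolynomials K R) (r : R) :
    P.comp (Polynomial.X - Polynomial.C r) = P - Polynomial.C (P.eval r) := by
  obtain ⟨f, hf⟩ := exists_linearMap_eq_aeval_of_mem_linearizedPolynomials hP R[X]
  have eval_C : Polynomial.aeval (Polynomial.C r) P = Polynomial.C (P.eval r) :=
    Polynomial.aeval_algebraMap_apply R[X] r P
  rw [Polynomial.comp_eq_aeval, ← hf, map_sub, hf, hf, Polynomial.aeval_X_left_apply, eval_C]

theorem eval_smul_of_mem_linearizedPolynomials [Algebra K R] {P : R[X]}
    (hP : P ∈ linearizedPolynomials K R) (c : K) (r : R) : P.eval (c • r) = c • P.eval r := by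
  obtain ⟨f, hf⟩ := exists_linearMap_eq_aeval_of_mem_linearizedPolynomials hP R
  simpa only [hf, Polynomial.coe_aeval_eq_eval] using map_smul f c r

theorem pow_card_mem_linearizedPolynomials [Algebra K R] {P : R[X]}
    (hP : P ∈ linearizedPolynomials K R) : P ^ Fintype.card K ∈ linearizedPolynomials K R := by
  induction hP using Submodule.span_induction with
  | mem P h =>
    obtain ⟨i, rfl⟩ := h
    exact Submodule.subset_span ⟨i + 1, by simp only [pow_succ, pow_mul]⟩
  | zero => simp
  | add P Q _ _ hP hQ =>
    have : (P + Q) ^ Fintype.card K = P ^ Fintype.card K + Q ^ Fintype.card K :=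
      map_add (FiniteField.frobeniusAlgHom K R[X]) P Q
    exact this ▸ add_mem hP hQ
  | smul r P _ hP => exact smul_pow r P (Fintype.card K) ▸ Submodule.smul_mem _ _ hP

variable (K) in
theorem prod_X_sub_C_eq_X_pow_card_sub_X :
    ∏ c : K, (Polynomial.X - Polynomial.C c) = Polynomial.X ^ Fintype.card K - Polynomial.X := by
  have roots := FiniteField.roots_X_pow_card_sub_X K
  have natDegree := FiniteField.X_pow_card_sub_X_natDegree_eq K (Fintype.one_lt_card (α := K))
  have monic : (Polynomial.X ^ Fintype.card K - Polynomial.X : K[X]).Monic :=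
    Polynomial.monic_X_pow_sub (by simpa using Fintype.one_lt_card)
  rw [← Polynomial.prod_multiset_X_sub_C_of_monic_of_roots_card_eq monic
    (by simp [roots, natDegree]), roots]
  rfl

theorem prod_sub_smul_of_ne_zero {F : Type*} [Field F] [Algebra K F] (a : F) {b : F}
    (hb : b ≠ 0) :
    ∏ c : K, (a - c • b) = a ^ Fintype.card K - b ^ (Fintype.card K - 1) * a := by
  have dehomogenized : ∏ c : K, (a / b - algebraMap K F c) = (a / b) ^ Fintype.card K - a / b := by
    simpa [map_prod] using
      congrArg (Polynomial.aeval (a / b)) (prod_X_sub_C_eq_X_pow_card_sub_X K)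
  have factor (c : K) : a - c • b = b * (a / b - algebraMap K F c) := by
    rw [Algebra.smul_def]
    field_simp
  rw [Finset.prod_congr rfl fun c _ ↦ factor c, Finset.prod_mul_distrib, dehomogenized,
    Finset.prod_const, Finset.card_univ]
  obtain ⟨m, hm⟩ := Nat.exists_eq_succ_of_ne_zero (Fintype.card_ne_zero (α := K))
  simp only [hm, Nat.succ_eq_add_one, Nat.add_sub_cancel, div_pow]
  field_simp
  ring

theorem prod_sub_smul [IsDomain R] [Algebra K R] (a b : R) :
    ∏ c : K, (a - c • b) = a ^ Fintype.card K - b ^ (Fintype.card K - 1) * a := by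
  obtain rfl | hb := eq_or_ne b 0
  · simp [Nat.sub_ne_zero_of_lt Fintype.one_lt_card]
  · apply FaithfulSMul.algebraMap_injective R (FractionRing R)
    simpa [map_prod, algebraMap.smul] using prod_sub_smul_of_ne_zero (K := K)
      (algebraMap R (FractionRing R) a) (b := algebraMap R (FractionRing R) b) (by simpa using hb)

end Linearized

section SubspacePolynomial

variable (K : Type*) {R : Type*} [Field K] [Fintype K] [CommRing R] [Algebra K R] {n : ℕ}

/-- The polynomial whose roots, with multiplicity, are the `K`-linear combinations of `x`. -/
def subspacePoly (x : Fin n → R) : R[X] :=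
  ∏ v : Fin n → K, (Polynomial.X - Polynomial.C (Fintype.linearCombination K x v))

variable (x : Fin n → R)

theorem monic_subspacePoly : (subspacePoly K x).Monic :=
  Polynomial.monic_prod_of_monic _ _ fun _ _ ↦ Polynomial.monic_X_sub_C _

theorem natDegree_subspacePoly [Nontrivial R] :
    (subspacePoly K x).natDegree = Fintype.card K ^ n := by
  rw [subspacePoly, Polynomial.natDegree_prod_of_monic _ _ fun _ _ ↦ Polynomial.monic_X_sub_C _]
  simp

theorem map_subspacePoly {S : Type*} [CommRing S] [Algebra K S] (φ : R →ₐ[K] S) :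
    (subspacePoly K x).map (φ : R →+* S) = subspacePoly K (φ ∘ x) := by
  rw [subspacePoly, Polynomial.map_prod]
  exact Finset.prod_congr rfl fun v _ ↦ by
    rw [Polynomial.map_sub, Polynomial.map_X, Polynomial.map_C]
    simp [Fintype.linearCombination_apply]

variable {K x}

theorem subspacePoly_eq_prod_image [DecidableEq R] (hx : LinearIndependent K x) :
    subspacePoly K x = ∏ r ∈ Finset.univ.image (Fintype.linearCombination K x),
      (Polynomial.X - Polynomial.C r) := by
  rw [subspacePoly, Finset.prod_image hx.fintypeLinearCombination_injective.injOn]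

theorem subspacePoly_congr {y : Fin n → R} (hx : LinearIndependent K x)
    (hy : LinearIndependent K y) (h : ∀ i, y i ∈ Submodule.span K (Set.range x)) :
    subspacePoly K y = subspacePoly K x := by
  classical
  have := FiniteDimensional.span_of_finite K (Set.finite_range x)
  have span_eq : Submodule.span K (Set.range y) = Submodule.span K (Set.range x) :=
    Submodule.eq_of_le_of_finrank_eq (Submodule.span_le.mpr (Set.range_subset_iff.mpr h))
      (by rw [finrank_span_eq_card hx, finrank_span_eq_card hy])
  have image_eq : Finset.univ.image (Fintype.linearCombination K y) =
      Finset.univ.image (Fintype.linearCombination K x) := by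
    rw [← Finset.coe_inj]
    simpa only [← Fintype.range_linearCombination, SetLike.ext'_iff, Finset.coe_image,
      Finset.coe_univ, Set.image_univ, LinearMap.coe_range] using span_eq
  rw [subspacePoly_eq_prod_image hx, subspacePoly_eq_prod_image hy, image_eq]

variable [IsDomain R]

theorem eval_subspacePoly_eq_zero_iff {r : R} :
    (subspacePoly K x).eval r = 0 ↔ r ∈ Submodule.span K (Set.range x) := by
  rw [subspacePoly, Polynomial.eval_prod, Finset.prod_eq_zero_iff,
    ← Fintype.range_linearCombination, LinearMap.mem_range]
  simp [sub_eq_zero, eq_comm (a := r)]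

theorem subspacePoly_succ (x : Fin (n + 1) → R)
    (hP : subspacePoly K (Fin.tail x) ∈ linearizedPolynomials K R) :
    subspacePoly K x = subspacePoly K (Fin.tail x) ^ Fintype.card K -
      (Polynomial.C ((subspacePoly K (Fin.tail x)).eval (x 0))) ^ (Fintype.card K - 1) *
        subspacePoly K (Fin.tail x) := by
  set P := subspacePoly K (Fin.tail x) with P_def
  have prod_cons (c : K) : ∏ v : Fin n → K, (Polynomial.X -
      Polynomial.C (Fintype.linearCombination K x (Fin.cons c v))) =
        P - c • Polynomial.C (P.eval (x 0)) := calc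
    _ = P.comp (Polynomial.X - Polynomial.C (c • x 0)) := by
      rw [P_def, subspacePoly, Polynomial.prod_comp]
      refine Finset.prod_congr rfl fun v _ ↦ ?_
      simp [Fintype.linearCombination_apply, Fin.sum_univ_succ, Fin.tail, sub_sub]
    _ = P - c • Polynomial.C (P.eval (x 0)) := by
      rw [comp_X_sub_C_of_mem_linearizedPolynomials hP, eval_smul_of_mem_linearizedPolynomials hP,
        Polynomial.smul_C]
  rw [← prod_sub_smul, subspacePoly, ← (Fin.consEquiv fun _ ↦ K).prod_comp, Fintype.prod_prod_type]
  exact Finset.prod_congr rfl fun c _ ↦ prod_cons c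

variable (K) in
theorem subspacePoly_mem_linearizedPolynomials :
    ∀ {n : ℕ} (x : Fin n → R), subspacePoly K x ∈ linearizedPolynomials K R
  | 0, x => Submodule.subset_span ⟨0, by simp [subspacePoly, Fintype.linearCombination_apply]⟩
  | n + 1, x => by
    have ih := subspacePoly_mem_linearizedPolynomials (Fin.tail x)
    rw [subspacePoly_succ x ih, ← Polynomial.C_pow, ← Polynomial.smul_eq_C_mul]
    exact sub_mem (pow_card_mem_linearizedPolynomials ih) (Submodule.smul_mem _ _ ih)

variable (K x) in
theorem subspacePoly_sub_C_eval (w : R) :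
    subspacePoly K x - Polynomial.C ((subspacePoly K x).eval w) = ∏ v : Fin n → K,
      (Polynomial.X - Polynomial.C (w + Fintype.linearCombination K x v)) := by
  rw [← comp_X_sub_C_of_mem_linearizedPolynomials (subspacePoly_mem_linearizedPolynomials K x),
    subspacePoly, Polynomial.prod_comp]
  simp [sub_sub]

theorem eval_subspacePoly_eq_eval_iff {r s : R} :
    (subspacePoly K x).eval r = (subspacePoly K x).eval s ↔
      r - s ∈ Submodule.span K (Set.range x) := by
  have := congrArg (Polynomial.eval r) <| comp_X_sub_C_of_mem_linearizedPolynomials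
    (subspacePoly_mem_linearizedPolynomials K x) s
  rw [← eval_subspacePoly_eq_zero_iff, ← sub_eq_zero]
  simpa using congrArg (· = 0) this.symm

theorem coeff_subspacePoly_mem {A : Subalgebra K R}
    (hA : ∀ i : Fin n, (subspacePoly K x).coeff (Fintype.card K ^ (i : ℕ)) ∈ A) (k : ℕ) :
    (subspacePoly K x).coeff k ∈ A := by
  by_cases hk : ∃ i, k = Fintype.card K ^ i
  · obtain ⟨i, rfl⟩ := hk
    obtain hi | rfl | hi := lt_trichotomy i n
    · exact hA ⟨i, hi⟩
    · rw [← natDegree_subspacePoly K x, (monic_subspacePoly K x).coeff_natDegree]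
      exact one_mem A
    · rw [Polynomial.coeff_eq_zero_of_natDegree_lt]
      · exact zero_mem A
      · rw [natDegree_subspacePoly]
        exact Nat.pow_lt_pow_right Fintype.one_lt_card hi
  · rw [coeff_eq_zero_of_mem_linearizedPolynomials (subspacePoly_mem_linearizedPolynomials K x)
      (not_exists.mp hk)]
    exact zero_mem A

end SubspacePolynomial

section SplitPolynomial

variable {A B : Type*} [CommRing A] [CommRing B] [Algebra A B]

theorem isIntegral_of_adjoin_roots_eq_top {p : A[X]} (monic : p.Monic) {S : Set B}
    (roots : ∀ s ∈ S, Polynomial.aeval s p = 0) (adjoin : Algebra.adjoin A S = ⊤) :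
    Algebra.IsIntegral A B := by
  rw [← integralClosure_eq_top_iff, ← top_le_iff, ← adjoin, Algebra.adjoin_le_iff]
  exact fun s hs ↦ ⟨p, monic, roots s hs⟩

theorem map_algebraMap_eq_prod (K L : Type*) [CommRing K] [CommRing L] [Algebra A K] [Algebra B L]
    [Algebra K L] [Algebra A L] [IsScalarTower A K L] [IsScalarTower A B L] {p : A[X]}
    {S : Finset B} (split : p.map (algebraMap A B) = ∏ s ∈ S, (Polynomial.X - Polynomial.C s)) :
    (p.map (algebraMap A K)).map (algebraMap K L) =
      ∏ s ∈ S, (Polynomial.X - Polynomial.C (algebraMap B L s)) := by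
  rw [Polynomial.map_map, ← IsScalarTower.algebraMap_eq A K L, IsScalarTower.algebraMap_eq A B L,
    ← Polynomial.map_map, split, Polynomial.map_prod]
  simp only [Polynomial.map_sub, Polynomial.map_X, Polynomial.map_C]

theorem isSplittingField_fractionRing_of_adjoin_roots_eq_top (K L : Type*) [Field K] [Field L]
    [Algebra A K] [Algebra B L] [IsFractionRing B L] [Algebra K L] [Algebra A L]
    [IsScalarTower A K L] [IsScalarTower A B L] {p : A[X]} {S : Finset B}
    (split : p.map (algebraMap A B) = ∏ s ∈ S, (Polynomial.X - Polynomial.C s))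
    (adjoin : Algebra.adjoin A (S : Set B) = ⊤) :
    (p.map (algebraMap A K)).IsSplittingField K L := by
  have split_L := map_algebraMap_eq_prod K L split
  have ne_zero : p.map (algebraMap A K) ≠ 0 := by
    intro h
    rw [h, Polynomial.map_zero, eq_comm, Finset.prod_eq_zero_iff] at split_L
    obtain ⟨s, -, hs⟩ := split_L
    exact Polynomial.X_sub_C_ne_zero _ hs
  rw [isSplittingField_iff_intermediateField]
  refine ⟨split_L ▸ .prod fun s _ ↦ .X_sub_C _, ?_⟩
  set F := IntermediateField.adjoin K ((p.map (algebraMap A K)).rootSet L)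
  have algebraMap_mem (b : B) : algebraMap B L b ∈ F := by
    suffices Algebra.adjoin A (S : Set B) ≤
        (F.toSubalgebra.restrictScalars A).comap (IsScalarTower.toAlgHom A B L) from
      this (adjoin ▸ Algebra.mem_top)
    refine Algebra.adjoin_le fun s hs ↦ IntermediateField.subset_adjoin _ _ ?_
    rw [Polynomial.mem_rootSet_of_ne ne_zero, ← Polynomial.eval_map_algebraMap, split_L,
      Polynomial.eval_prod]
    exact Finset.prod_eq_zero hs (by simp)
  refine eq_top_iff.mpr fun z _ ↦ ?_
  obtain ⟨a, b, -, rfl⟩ := IsFractionRing.div_surjective B z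
  exact div_mem (algebraMap_mem a) (algebraMap_mem b)

theorem isInvariant_of_adjoin_roots_eq_top [IsDomain A] [IsDomain B] [IsIntegrallyClosed A]
    [IsIntegrallyClosed B] [FaithfulSMul A B] {p : A[X]} (monic : p.Monic) {S : Finset B}
    (split : p.map (algebraMap A B) = ∏ s ∈ S, (Polynomial.X - Polynomial.C s))
    (adjoin : Algebra.adjoin A (S : Set B) = ⊤) :
    Algebra.IsInvariant A B (B ≃ₐ[A] B) := by
  let K := FractionRing A
  let L := FractionRing B
  let _ : Algebra K L := FractionRing.liftAlgebra A L
  have : IsScalarTower A K L := FractionRing.isScalarTower_liftAlgebra A L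
  have splitting : (p.map (algebraMap A K)).IsSplittingField K L :=
    isSplittingField_fractionRing_of_adjoin_roots_eq_top K L split adjoin
  have separable : (p.map (algebraMap A K)).Separable := by
    rw [← Polynomial.separable_map (algebraMap K L), map_algebraMap_eq_prod K L split]
    exact Polynomial.separable_prod_X_sub_C_iff'.mpr fun _ _ _ _ h ↦
      FaithfulSMul.algebraMap_injective B L h
  have roots (s : B) (hs : s ∈ S) : Polynomial.aeval s p = 0 := by
    rw [← Polynomial.eval_map_algebraMap, split, Polynomial.eval_prod]
    exact Finset.prod_eq_zero hs (by simp)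
  have : Algebra.IsIntegral A B := isIntegral_of_adjoin_roots_eq_top monic roots adjoin
  have : FiniteDimensional K L := splitting.finiteDimensional
  have : IsGalois K L := .of_separable_splitting_field separable
  exact Algebra.isInvariant_of_isGalois' A K L B

end SplitPolynomial

theorem adjoin_add_linearCombination_eq_top {K R : Type*} [CommRing K] [CommRing R] [Algebra K R]
    {n : ℕ} {x : Fin n → R} {w : R} (A : Type*) [CommRing A] [Algebra K A] [Algebra A R]
    [IsScalarTower K A R] (h : Algebra.adjoin K (insert w (Set.range x)) = ⊤) :
    Algebra.adjoin A (Set.range fun v ↦ w + Fintype.linearCombination K x v) = ⊤ := by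
  set T := Algebra.adjoin A (Set.range fun v ↦ w + Fintype.linearCombination K x v)
  have add_mem (v : Fin n → K) : w + Fintype.linearCombination K x v ∈ T :=
    Algebra.subset_adjoin ⟨v, rfl⟩
  have w_mem : w ∈ T := by simpa using add_mem 0
  have x_mem (i : Fin n) : x i ∈ T := by
    simpa [Fintype.linearCombination_apply_single] using sub_mem (add_mem (Pi.single i 1)) w_mem
  have le_T : Algebra.adjoin K (insert w (Set.range x)) ≤ T.restrictScalars K :=
    Algebra.adjoin_le (Set.insert_subset w_mem (Set.range_subset_iff.mpr x_mem))
  exact eq_top_iff.mpr fun r _ ↦ le_T (h ▸ Algebra.mem_top)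

section AffineDickson

variable (K : Type*) {R : Type*} [Field K] [Fintype K] [CommRing R] [Algebra K R] {n : ℕ}
  (x : Fin n → R) (w : R)

/-- The Dickson invariants of `x` (up to sign), as coefficients of the subspace polynomial of `x` in
decreasing degree, followed by the value of this polynomial at `w`. -/
def affineDickson : Fin (n + 1) → R :=
  Fin.snoc (fun i : Fin n ↦ (subspacePoly K x).coeff (Fintype.card K ^ (i.rev : ℕ)))
    ((subspacePoly K x).eval w)

/-- The algebra generated by the Dickson invariants of `x` and by the orbit product of `w`. -/
abbrev affineDicksonAlgebra : Subalgebra K R :=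
  Algebra.adjoin K (Set.range (affineDickson K x w))

theorem eval_subspacePoly_mem_affineDicksonAlgebra :
    (subspacePoly K x).eval w ∈ affineDicksonAlgebra K x w :=
  Algebra.subset_adjoin ⟨Fin.last n, by simp [affineDickson]⟩

variable [IsDomain R]

theorem coeff_subspacePoly_mem_affineDicksonAlgebra (k : ℕ) :
    (subspacePoly K x).coeff k ∈ affineDicksonAlgebra K x w :=
  coeff_subspacePoly_mem (A := affineDicksonAlgebra K x w) (fun i ↦
    Algebra.subset_adjoin ⟨i.rev.castSucc, by
      simp only [affineDickson, Fin.snoc_castSucc, Fin.rev_rev]⟩) k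

theorem exists_monic_map_eq_subspacePoly_sub_C :
    ∃ p : (affineDicksonAlgebra K x w)[X], p.Monic ∧
      p.map (algebraMap _ R) =
        subspacePoly K x - Polynomial.C ((subspacePoly K x).eval w) := by
  have lifts : subspacePoly K x - Polynomial.C ((subspacePoly K x).eval w) ∈
      Polynomial.lifts (algebraMap (affineDicksonAlgebra K x w) R) := by
    refine (Polynomial.lifts_iff_coeff_lifts _).mpr fun k ↦ Subtype.range_coe.ge ?_
    rw [Polynomial.coeff_sub, Polynomial.coeff_C]
    refine sub_mem (coeff_subspacePoly_mem_affineDicksonAlgebra K x w k) ?_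
    split_ifs
    exacts [eval_subspacePoly_mem_affineDicksonAlgebra K x w, zero_mem _]
  have monic : (subspacePoly K x - Polynomial.C ((subspacePoly K x).eval w)).Monic := by
    rw [subspacePoly_sub_C_eval]
    exact Polynomial.monic_prod_of_monic _ _ fun _ _ ↦ Polynomial.monic_X_sub_C _
  obtain ⟨p, hp, -, p_monic⟩ := Polynomial.lifts_and_natDegree_eq_and_monic lifts monic
  exact ⟨p, p_monic, hp⟩

variable {K x w}

theorem fixes_affineDicksonAlgebra_iff {φ : R →ₐ[K] R} (hx : LinearIndependent K x)
    (hφ : LinearIndependent K (φ ∘ x)) :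
    (∀ p ∈ affineDicksonAlgebra K x w, φ p = p) ↔
      (∀ i, φ (x i) ∈ Submodule.span K (Set.range x)) ∧
        φ w - w ∈ Submodule.span K (Set.range x) := by
  have φ_eval (r : R) : φ ((subspacePoly K x).eval r) = (subspacePoly K (φ ∘ x)).eval (φ r) := by
    rw [← map_subspacePoly]
    exact (Polynomial.eval_map_apply (φ : R →+* R) r).symm
  constructor
  · intro h
    have map_eq : subspacePoly K (φ ∘ x) = subspacePoly K x := by
      rw [← map_subspacePoly]
      exact Polynomial.ext fun k ↦ by
        simpa using h _ (coeff_subspacePoly_mem_affineDicksonAlgebra K x w k)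
    refine ⟨fun i ↦ ?_, ?_⟩
    · rw [← eval_subspacePoly_eq_zero_iff, ← map_eq, ← φ_eval,
        eval_subspacePoly_eq_zero_iff.mpr (Submodule.subset_span ⟨i, rfl⟩), map_zero]
    · rw [← eval_subspacePoly_eq_eval_iff, ← map_eq, ← φ_eval, map_eq]
      exact h _ (eval_subspacePoly_mem_affineDicksonAlgebra K x w)
  · rintro ⟨φ_x, φ_w⟩
    have map_eq : subspacePoly K (φ ∘ x) = subspacePoly K x := subspacePoly_congr hx hφ φ_x
    suffices affineDicksonAlgebra K x w ≤ AlgHom.equalizer φ (AlgHom.id K R) from this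
    refine Algebra.adjoin_le (Set.range_subset_iff.mpr (Fin.lastCases ?_ fun i ↦ ?_))
    · simpa [affineDickson, φ_eval, map_eq] using eval_subspacePoly_eq_eval_iff.mpr φ_w
    · have := congrArg (Polynomial.coeff · (Fintype.card K ^ (i.rev : ℕ)))
        ((map_subspacePoly K x φ).trans map_eq)
      simpa [affineDickson] using this

theorem isIntegral_affineDicksonAlgebra
    (generate : Algebra.adjoin K (insert w (Set.range x)) = ⊤) :
    Algebra.IsIntegral (affineDicksonAlgebra K x w) R := by
  obtain ⟨p, monic, hp⟩ := exists_monic_map_eq_subspacePoly_sub_C K x w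
  refine isIntegral_of_adjoin_roots_eq_top monic ?_
    (adjoin_add_linearCombination_eq_top _ generate)
  rintro _ ⟨v, rfl⟩
  rw [← Polynomial.eval_map_algebraMap, hp, subspacePoly_sub_C_eval, Polynomial.eval_prod]
  exact Finset.prod_eq_zero (Finset.mem_univ v) (by simp)

variable [IsIntegrallyClosed R] [IsIntegrallyClosed (affineDicksonAlgebra K x w)]

theorem isInvariant_affineDicksonAlgebra (hx : LinearIndependent K x)
    (generate : Algebra.adjoin K (insert w (Set.range x)) = ⊤) :
    Algebra.IsInvariant (affineDicksonAlgebra K x w) R (R ≃ₐ[affineDicksonAlgebra K x w] R) := by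
  classical
  obtain ⟨p, monic, hp⟩ := exists_monic_map_eq_subspacePoly_sub_C K x w
  have injective : Function.Injective fun v ↦ w + Fintype.linearCombination K x v :=
    (add_right_injective w).comp hx.fintypeLinearCombination_injective
  refine isInvariant_of_adjoin_roots_eq_top
    (S := Finset.univ.image fun v ↦ w + Fintype.linearCombination K x v) monic ?_ ?_
  · rw [hp, subspacePoly_sub_C_eval, Finset.prod_image injective.injOn]
  · rw [Finset.coe_image, Finset.coe_univ, Set.image_univ]
    exact adjoin_add_linearCombination_eq_top _ generate

theorem mem_affineDicksonAlgebra_iff_forall_algEquiv (hx : LinearIndependent K x)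
    (generate : Algebra.adjoin K (insert w (Set.range x)) = ⊤) (p : R) :
    p ∈ affineDicksonAlgebra K x w ↔
      ∀ φ : R ≃ₐ[K] R, (∀ i, φ (x i) ∈ Submodule.span K (Set.range x)) →
        φ w - w ∈ Submodule.span K (Set.range x) → φ p = p := by
  have fixes_iff (φ : R ≃ₐ[K] R) :=
    fixes_affineDicksonAlgebra_iff (w := w) (φ := (φ : R →ₐ[K] R)) hx
      (hx.map' φ.toLinearMap (LinearMap.ker_eq_bot.mpr φ.injective))
  constructor
  · exact fun hp φ φ_x φ_w ↦ (fixes_iff φ).mpr ⟨φ_x, φ_w⟩ p hp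
  · intro hp
    have := isInvariant_affineDicksonAlgebra hx generate
    obtain ⟨a, rfl⟩ := Algebra.IsInvariant.isInvariant (A := affineDicksonAlgebra K x w)
      (G := R ≃ₐ[affineDicksonAlgebra K x w] R) p fun φ ↦ by
        have affine := (fixes_iff (φ.restrictScalars K)).mp fun a ha ↦ φ.commutes ⟨a, ha⟩
        exact hp (φ.restrictScalars K) affine.1 affine.2
    exact a.2

end AffineDickson

section MvPolynomial

theorem linearIndependent_X_comp_castSucc (K : Type*) [CommRing K] (n : ℕ) :
    LinearIndependent K (X ∘ Fin.castSucc : Fin n → MvPolynomial (Fin (n + 1)) K) :=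
  (linearIndependent_X _ K).comp _ (Fin.castSucc_injective n)

theorem adjoin_insert_X_last_eq_top (K : Type*) [CommRing K] (n : ℕ) :
    Algebra.adjoin K (insert (X (Fin.last n)) (Set.range (X ∘ Fin.castSucc))) =
      (⊤ : Subalgebra K (MvPolynomial (Fin (n + 1)) K)) := by
  rw [← adjoin_range_X]
  congr
  ext p
  simp [Fin.exists_fin_succ', or_comm, eq_comm]

theorem toMvPolynomial_eq_linearCombination {K m n : Type*} [CommRing K] [Fintype n]
    (M : Matrix m n K) (i : m) :
    M.toMvPolynomial i = Fintype.linearCombination K (X : n → MvPolynomial n K) (M i) := by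
  simp [Matrix.toMvPolynomial, Fintype.linearCombination_apply, X, smul_monomial]

theorem linearIndependent_toMvPolynomial_iff {K m n : Type*} [CommRing K] [Fintype n]
    {M : Matrix m n K} : LinearIndependent K M.toMvPolynomial ↔ LinearIndependent K M.row := by
  rw [funext (toMvPolynomial_eq_linearCombination M)]
  exact LinearMap.linearIndependent_iff (Fintype.linearCombination K X)
    (LinearMap.ker_eq_bot.mpr (linearIndependent_X n K).fintypeLinearCombination_injective)

theorem exists_GL_aeval_toMvPolynomial_eq {K : Type*} [Field K] {n : ℕ}
    (φ : MvPolynomial (Fin (n + 1)) K ≃ₐ[K] MvPolynomial (Fin (n + 1)) K)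
    (φ_base : ∀ i : Fin n, φ (X i.castSucc) ∈ Submodule.span K (Set.range (X ∘ Fin.castSucc)))
    (φ_last : φ (X (Fin.last n)) - X (Fin.last n) ∈
      Submodule.span K (Set.range (X ∘ Fin.castSucc))) :
    ∃ g : GL (Fin (n + 1)) K, (∀ i : Fin n, g i.castSucc (Fin.last n) = 0) ∧
      g (Fin.last n) (Fin.last n) = 1 ∧ aeval g.1.toMvPolynomial = (φ : _ →ₐ[K] _) := by
  simp only [← Fintype.range_linearCombination, LinearMap.mem_range] at φ_base φ_last
  choose a ha using φ_base
  obtain ⟨b, hb⟩ := φ_last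
  let M : Matrix (Fin (n + 1)) (Fin (n + 1)) K :=
    Fin.snoc (fun i ↦ Fin.snoc (a i) 0) (Fin.snoc b 1)
  have M_eq (i : Fin (n + 1)) : M.toMvPolynomial i = φ (X i) := by
    rw [toMvPolynomial_eq_linearCombination]
    induction i using Fin.lastCases with
    | last =>
      rw [← sub_add_cancel (φ _) (X _), ← hb]
      simp [M, Fintype.linearCombination_apply, Fin.sum_univ_castSucc]
    | cast i =>
      rw [← ha]
      simp [M, Fintype.linearCombination_apply, Fin.sum_univ_castSucc]
  have M_isUnit : IsUnit M := by
    rw [← Matrix.linearIndependent_rows_iff_isUnit, ← linearIndependent_toMvPolynomial_iff,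
      funext M_eq]
    exact (linearIndependent_X (Fin (n + 1)) K).map' φ.toLinearMap
      (LinearMap.ker_eq_bot.mpr φ.injective)
  refine ⟨M_isUnit.unit, fun i ↦ ?_, ?_, algHom_ext fun i ↦ ?_⟩
  · simp [M_isUnit.unit_spec, M]
  · simp [M_isUnit.unit_spec, M]
  · simp only [IsUnit.unit_spec, aeval_X, M_eq, AlgEquiv.coe_toAlgHom]

variable (K : Type*) [Field K] [Fintype K] (n : ℕ)

theorem algebraicIndependent_affineDickson : AlgebraicIndependent K
    (affineDickson K (X ∘ Fin.castSucc) (X (Fin.last n) : MvPolynomial (Fin (n + 1)) K)) := by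
  have := isIntegral_affineDicksonAlgebra (adjoin_insert_X_last_eq_top K n)
  exact (Algebra.IsAlgebraic.isTranscendenceBasis_of_lift_le_trdeg_of_finite K _
    (by rw [MvPolynomial.trdeg_of_isDomain]; simp)).1

theorem isIntegrallyClosed_affineDicksonAlgebra : IsIntegrallyClosed (affineDicksonAlgebra K
    (X ∘ Fin.castSucc) (X (Fin.last n) : MvPolynomial (Fin (n + 1)) K)) :=
  .of_equiv (algebraicIndependent_affineDickson K n).aevalEquiv.toRingEquiv

variable {K n}

theorem aeval_toMvPolynomial_fixes_affineDicksonAlgebra {g : GL (Fin (n + 1)) K}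
    (g_base : ∀ i : Fin n, g i.castSucc (Fin.last n) = 0)
    (g_last : g (Fin.last n) (Fin.last n) = 1) {p : MvPolynomial (Fin (n + 1)) K}
    (hp : p ∈ affineDicksonAlgebra K (X ∘ Fin.castSucc) (X (Fin.last n))) :
    aeval g.1.toMvPolynomial p = p := by
  have rows : LinearIndependent K g.1.toMvPolynomial :=
    linearIndependent_toMvPolynomial_iff.mpr (Matrix.linearIndependent_rows_of_isUnit g.isUnit)
  have base : LinearIndependent K
      (aeval (R := K) g.1.toMvPolynomial ∘ X ∘ (Fin.castSucc : Fin n → _)) := by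
    simpa [Function.comp_def] using rows.comp _ (Fin.castSucc_injective n)
  refine (fixes_affineDicksonAlgebra_iff (linearIndependent_X_comp_castSucc K n) base).mpr
    ⟨fun i ↦ ?_, ?_⟩ p hp <;>
  rw [← Fintype.range_linearCombination]
  · refine ⟨fun j ↦ g i.castSucc j.castSucc, ?_⟩
    simp [toMvPolynomial_eq_linearCombination, Fintype.linearCombination_apply,
      Fin.sum_univ_castSucc, g_base]
  · refine ⟨fun j ↦ g (Fin.last n) j.castSucc, ?_⟩
    simp [toMvPolynomial_eq_linearCombination, Fintype.linearCombination_apply,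
      Fin.sum_univ_castSucc, g_last]

theorem mem_affineDicksonAlgebra_iff_forall_GL (p : MvPolynomial (Fin (n + 1)) K) :
    p ∈ affineDicksonAlgebra K (X ∘ Fin.castSucc) (X (Fin.last n)) ↔
      ∀ g : GL (Fin (n + 1)) K, (∀ i : Fin n, g i.castSucc (Fin.last n) = 0) →
        g (Fin.last n) (Fin.last n) = 1 → aeval g.1.toMvPolynomial p = p := by
  constructor
  · exact fun hp g g_base g_last ↦ aeval_toMvPolynomial_fixes_affineDicksonAlgebra g_base g_last hp
  · intro hp
    have := isIntegrallyClosed_affineDicksonAlgebra K n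
    refine (mem_affineDicksonAlgebra_iff_forall_algEquiv (linearIndependent_X_comp_castSucc K n)
      (adjoin_insert_X_last_eq_top K n) p).mpr fun φ φ_base φ_last ↦ ?_
    obtain ⟨g, g_base, g_last, hg⟩ := exists_GL_aeval_toMvPolynomial_eq φ φ_base φ_last
    simpa [hg] using hp g g_base g_last

end MvPolynomial

theorem stmt_8_general (K : Type*) [Field K] [Fintype K] (n : ℕ) :
    (∀ p : MvPolynomial (Fin (n + 1)) K,
      (∀ g : GL (Fin (n + 1)) K, (∀ i : Fin n, g i.castSucc (Fin.last n) = 0) →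
        g (Fin.last n) (Fin.last n) = 1 → aeval g.1.toMvPolynomial p = p) ↔
      p ∈ Algebra.adjoin K (Set.range (affineDickson K (X ∘ Fin.castSucc) (X (Fin.last n))))) ∧
    AlgebraicIndependent K
      (affineDickson K (X ∘ Fin.castSucc) (X (Fin.last n) : MvPolynomial (Fin (n + 1)) K)) :=
  ⟨fun p ↦ (mem_affineDicksonAlgebra_iff_forall_GL p).symm, algebraicIndependent_affineDickson K n⟩

section BinaryField

variable {R : Type*} [CommRing R] [Algebra (ZMod 2) R] {n : ℕ} {x : Fin n → R}

theorem spanF2_eq_image_linearCombination [DecidableEq R] (x : Fin n → R) :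
    spanF2 x = Finset.univ.image (Fintype.linearCombination (ZMod 2) x) := by
  have sum_eq (v : Fin n → ZMod 2) :
      Fintype.linearCombination (ZMod 2) x v = ∑ j with v j = 1, x j := by
    rw [Fintype.linearCombination_apply, Finset.sum_filter]
    refine Finset.sum_congr rfl fun j _ ↦ ?_
    have : ∀ c : ZMod 2, c = 0 ∨ c = 1 := by decide
    obtain h | h := this (v j) <;> simp [h]
  ext r
  simp only [spanF2, Finset.mem_image, Finset.mem_univ, true_and, sum_eq]
  constructor
  · rintro ⟨s, rfl⟩
    exact ⟨fun j ↦ if j ∈ s then 1 else 0, by simp⟩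
  · rintro ⟨v, rfl⟩
    exact ⟨_, rfl⟩

theorem card_spanF2 (hx : LinearIndependent (ZMod 2) x) : (spanF2 x).card = 2 ^ n := by
  classical
  rw [spanF2_eq_image_linearCombination,
    Finset.card_image_of_injective _ hx.fintypeLinearCombination_injective]
  simp

theorem subspacePoly_eq_prod_spanF2 (hx : LinearIndependent (ZMod 2) x) :
    subspacePoly (ZMod 2) x = ∏ α ∈ spanF2 x, (Polynomial.X + Polynomial.C α) := by
  classical
  have sub_eq_add (α : R) : Polynomial.X - Polynomial.C α = Polynomial.X + Polynomial.C α := by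
    rw [sub_eq_add_neg, ← Polynomial.C_neg, ← neg_one_smul (ZMod 2) α]
    simp
  simp only [subspacePoly_eq_prod_image hx, sub_eq_add, spanF2_eq_image_linearCombination]

theorem dickson_eq_coeff_subspacePoly (hx : LinearIndependent (ZMod 2) x) (i : ℕ) :
    dickson x i = (subspacePoly (ZMod 2) x).coeff (2 ^ (n - i)) := by
  have le_card : 2 ^ (n - i) ≤ (spanF2 x).val.card :=
    (card_spanF2 hx).ge.trans' (Nat.pow_le_pow_right two_pos (n.sub_le i))
  rw [subspacePoly_eq_prod_spanF2 hx]
  refine .trans ?_ (Multiset.prod_X_add_C_coeff (spanF2 x).val le_card).symm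
  rw [dickson, Finset.card_val, card_spanF2 hx]

theorem prodAdd_eq_eval_subspacePoly (hx : LinearIndependent (ZMod 2) x) (w : R) :
    prodAdd x w = (subspacePoly (ZMod 2) x).eval w := by
  simp [prodAdd, subspacePoly_eq_prod_spanF2 hx, Polynomial.eval_prod]

theorem affineDickson_eq_snoc_dickson (hx : LinearIndependent (ZMod 2) x) (w : R) :
    affineDickson (ZMod 2) x w = Fin.snoc (fun i : Fin n ↦ dickson x (i + 1)) (prodAdd x w) := by
  simp only [affineDickson, dickson_eq_coeff_subspacePoly hx, prodAdd_eq_eval_subspacePoly hx,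
    ZMod.card, Fin.val_rev]

theorem affineDickson_X_eq_b :
    affineDickson (ZMod 2) (X ∘ Fin.castSucc) (X (Fin.last 3)) = ![b4, b6, b7, b8] := by
  have X_eq : (X ∘ Fin.castSucc : Fin 3 → R4) = ![xP, yP, zP] := by
    ext1 i
    fin_cases i <;> rfl
  rw [affineDickson_eq_snoc_dickson (linearIndependent_X_comp_castSucc _ 3), X_eq]
  ext1 i
  fin_cases i <;> rfl

theorem matAct_eq_aeval_toMvPolynomial (g : Matrix (Fin 4) (Fin 4) (ZMod 2)) :
    matAct g = aeval g.toMvPolynomial := by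
  simp only [matAct, C_mul_X_eq_monomial]
  rfl

theorem memGL31_iff (g : GL (Fin 4) (ZMod 2)) :
    memGL31 g ↔ (∀ i : Fin 3, g i.castSucc (Fin.last 3) = 0) ∧ g (Fin.last 3) (Fin.last 3) = 1 := by
  have base : memGL31 g ↔ ∀ i : Fin 3, g i.castSucc (Fin.last 3) = 0 := by
    simp [memGL31, Fin.forall_fin_succ]
  rw [base, iff_self_and]
  intro col
  have last_ne_zero : g (Fin.last 3) (Fin.last 3) ≠ 0 := fun last ↦
    g.det.ne_zero <| Matrix.det_eq_zero_of_column_eq_zero (Fin.last 3) (Fin.lastCases last col)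
  generalize g (Fin.last 3) (Fin.last 3) = c at last_ne_zero
  decide +revert

end BinaryField

theorem stmt_8 :
    (∀ p : R4,
        (∀ g : GL (Fin 4) (ZMod 2), memGL31 g →
            matAct (g : Matrix (Fin 4) (Fin 4) (ZMod 2)) p = p) ↔
          p ∈ Algebra.adjoin (ZMod 2) {b4, b6, b7, b8}) ∧
    AlgebraicIndependent (ZMod 2) ![b4, b6, b7, b8] := by
  have general := stmt_8_general (ZMod 2) 3
  rw [affineDickson_X_eq_b] at general
  simpa only [memGL31_iff, and_imp, matAct_eq_aeval_toMvPolynomial, Matrix.range_cons,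
    Matrix.range_empty, Set.union_empty, Set.singleton_union] using general
end
end

section
/- The subalgebra of F_2[x,y,z,w] consisting of the polynomials invariant under every element of GL^2_{2'}(F_2) equals the F_2-subalgebra generated by c_2, c_3, c'_4, c''_4; moreover c_2, c_3, c'_4, c''_4 are algebraically independent over F_2. -/
noncomputable section

open MvPolynomial

/-- Membership in the subgroup `GL²₂'(𝔽₂) ≤ GL₄(𝔽₂)` of matrices `g` with
`g₁₃ = g₁₄ = g₂₃ = g₂₄ = 0`, `g₃₃ = g₄₄ = 1` and `g₃₄ = g₄₃ = 0`
(in one-based indexing). -/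
def memGL22' (g : GL (Fin 4) (ZMod 2)) : Prop :=
  (g : Matrix (Fin 4) (Fin 4) (ZMod 2)) 0 2 = 0 ∧
  (g : Matrix (Fin 4) (Fin 4) (ZMod 2)) 0 3 = 0 ∧
  (g : Matrix (Fin 4) (Fin 4) (ZMod 2)) 1 2 = 0 ∧
  (g : Matrix (Fin 4) (Fin 4) (ZMod 2)) 1 3 = 0 ∧
  (g : Matrix (Fin 4) (Fin 4) (ZMod 2)) 2 2 = 1 ∧
  (g : Matrix (Fin 4) (Fin 4) (ZMod 2)) 3 3 = 1 ∧
  (g : Matrix (Fin 4) (Fin 4) (ZMod 2)) 2 3 = 0 ∧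
  (g : Matrix (Fin 4) (Fin 4) (ZMod 2)) 3 2 = 0

/-!
Put `A = 𝔽₂[c₂, c₃, c₄', c₄'']` and adjoin `x`, `y`, `z`, `w` to `A` one at a time. Each variable
is a root of a monic polynomial over the ring reached so far, namely of `T³ + c₂T + c₃`,
`T² + xT + (x² + c₂)`, `T⁴ + c₂T² + c₃T + c₄'` and `T⁴ + c₂T² + c₃T + c₄''` respectively, and its
images under the group elements fixing that ring are as many as the degree.

Now let `p` be invariant, and suppose that `p` lies in `B[u]`, where `u` is the last variable
adjoined to a ring `B` of the tower. Then `p = r(u)` with `r` over `B` of degree less than the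
number of conjugates of `u`. Applying group elements that fix `B`, we see that `r` takes the value
`p` at all of these conjugates, so `r` is constant and `p ∈ B`. Starting from `𝔽₂[x, y, z, w]`,
four such steps lead down to `p ∈ A`.

The polynomial ring is integral over `A`, so `A` has transcendence degree four and its four
generators are algebraically independent.
-/

section Descent

theorem mem_bot_of_mem_adjoin_singleton_of_conjugates {A B : Type*} [CommRing A] [CommRing B]
    [IsDomain B] [Algebra A B] {F : Polynomial A} {u p : B} {s : Finset B} (hF : F.Monic)
    (hu : Polynomial.aeval u F = 0) (hs : F.natDegree ≤ s.card) (hp : p ∈ Algebra.adjoin A {u})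
    (hfix : ∀ v ∈ s, ∃ σ : B →ₐ[A] B, σ u = v ∧ σ p = p) :
    p ∈ (⊥ : Subalgebra A B) := by
  rw [Algebra.adjoin_singleton_eq_range_aeval] at hp
  obtain ⟨q, hq : Polynomial.aeval u q = p⟩ := hp
  have : Nontrivial A := (algebraMap A B).domain_nontrivial
  set r := q %ₘ F
  have hr : Polynomial.aeval u r = p := (Polynomial.aeval_modByMonic_eq_self_of_root hu).trans hq
  have hF_pos : 0 < F.natDegree := hF.natDegree_pos.mpr fun hF1 => by simp [hF1] at hu
  have hconst : r.map (algebraMap A B) = Polynomial.C p := by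
    refine Polynomial.eq_of_degrees_lt_of_eval_finset_eq s ?_ ?_ fun v hv => ?_
    · exact Polynomial.degree_map_le.trans_lt <| (Polynomial.degree_modByMonic_lt q hF).trans_le <|
        Polynomial.natDegree_le_iff_degree_le.mp hs
    · exact Polynomial.degree_C_le.trans_lt (by exact_mod_cast hF_pos.trans_le hs)
    · obtain ⟨σ, rfl, hσp⟩ := hfix v hv
      rw [Polynomial.eval_map_algebraMap, Polynomial.aeval_algHom_apply, hr, hσp,
        Polynomial.eval_C]
  exact Algebra.mem_bot.mpr ⟨r.coeff 0, by
    rw [← Polynomial.coeff_map, hconst, Polynomial.coeff_C_zero]⟩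

theorem mem_adjoin_of_mem_adjoin_insert_of_conjugates {k B : Type*} [CommRing k] [CommRing B]
    [IsDomain B] [Algebra k B] {S : Set B} {F : Polynomial (Algebra.adjoin k S)} {u p : B}
    {s : Finset B} (hF : F.Monic) (hu : Polynomial.aeval u F = 0) (hs : F.natDegree ≤ s.card)
    (hp : p ∈ Algebra.adjoin k (insert u S))
    (hfix : ∀ v ∈ s, ∃ σ : B →ₐ[k] B, (∀ a ∈ S, σ a = a) ∧ σ u = v ∧ σ p = p) :
    p ∈ Algebra.adjoin k S := by
  have hp' : p ∈ Algebra.adjoin (Algebra.adjoin k S) {u} := by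
    rwa [Set.insert_eq, Set.union_comm, Algebra.adjoin_union_eq_adjoin_adjoin] at hp
  obtain ⟨a, rfl⟩ := Algebra.mem_bot.mp <|
    mem_bot_of_mem_adjoin_singleton_of_conjugates hF hu hs hp' fun v hv => by
      obtain ⟨σ, hσS, hσu, hσp⟩ := hfix v hv
      have hσ : Algebra.adjoin k S ≤ AlgHom.equalizer σ (AlgHom.id k B) :=
        AlgHom.adjoin_le_equalizer σ (AlgHom.id k B) hσS
      exact ⟨{ σ with commutes' := fun a => hσ a.2 }, hσu, hσp⟩
  exact a.2

end Descent

theorem algebraicIndependent_of_isIntegral_X {k σ : Type*} [CommRing k] [IsDomain k] [Finite σ]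
    {v : σ → MvPolynomial σ k}
    (h : ∀ i, IsIntegral (Algebra.adjoin k (Set.range v)) (X i : MvPolynomial σ k)) :
    AlgebraicIndependent k v := by
  have hX : Algebra.adjoin k (Set.range X) ≤
      (integralClosure (Algebra.adjoin k (Set.range v)) (MvPolynomial σ k)).restrictScalars k :=
    Algebra.adjoin_le (Set.range_subset_iff.mpr h)
  rw [adjoin_range_X] at hX
  have : Algebra.IsIntegral (Algebra.adjoin k (Set.range v)) (MvPolynomial σ k) :=
    ⟨fun p => hX Algebra.mem_top⟩
  refine (Algebra.IsAlgebraic.isTranscendenceBasis_of_lift_le_trdeg_of_finite k v ?_).1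
  rw [MvPolynomial.trdeg_of_isDomain]
  simp

theorem map_multiset_esymm {R S F : Type*} [CommSemiring R] [CommSemiring S] [FunLike F R S]
    [RingHomClass F R S] (f : F) (s : Multiset R) (n : ℕ) :
    f (s.esymm n) = (s.map f).esymm n := by
  simp only [Multiset.esymm, map_multiset_sum, Multiset.powersetCard_map, Multiset.map_map,
    Function.comp_def, map_multiset_prod]

section Span

variable {R : Type*} [CommRing R] {n : ℕ} {v : Fin n → R}

section Module

variable [Module (ZMod 2) R]

theorem coe_spanF2 (v : Fin n → R) :
    (spanF2 v : Set R) = Submodule.span (ZMod 2) (Set.range v) := by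
  classical
  have eq_ite_eq_one : ∀ a : ZMod 2, a = if a = 1 then 1 else 0 := by decide
  ext a
  simp only [spanF2, Finset.coe_image, Finset.coe_univ, Set.image_univ, Set.mem_range,
    SetLike.mem_coe, Submodule.mem_span_range_iff_exists_fun]
  constructor
  · rintro ⟨s, rfl⟩
    exact ⟨fun j => if j ∈ s then 1 else 0, by simp⟩
  · rintro ⟨c, rfl⟩
    refine ⟨Finset.univ.filter (c · = 1), ?_⟩
    rw [Finset.sum_filter]
    refine Finset.sum_congr rfl fun j _ => ?_
    conv_rhs => rw [eq_ite_eq_one (c j)]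
    split_ifs <;> simp

theorem mem_spanF2 {a : R} : a ∈ spanF2 v ↔ a ∈ Submodule.span (ZMod 2) (Set.range v) := by
  rw [← Finset.mem_coe, coe_spanF2, SetLike.mem_coe]

theorem prodAdd_eq_zero_of_mem {w : R} (hw : w ∈ spanF2 v) : prodAdd v w = 0 := by
  refine Finset.prod_eq_zero (i := -w) ?_ (add_neg_cancel w)
  rw [mem_spanF2] at hw ⊢
  exact neg_mem hw

theorem prodAdd_add_of_mem {α : R} (hα : α ∈ spanF2 v) (w : R) :
    prodAdd v (w + α) = prodAdd v w := by
  refine Finset.prod_bijective (α + ·) (AddGroup.addLeft_bijective α) (fun β => ?_)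
    fun β _ => add_assoc w α β
  simp only [mem_spanF2] at hα ⊢
  exact (Submodule.add_mem_iff_right _ hα).symm

theorem map_spanF2 {φ : R →ₗ[ZMod 2] R} (hφ : Function.Injective φ)
    (hv : ∀ i, φ (v i) ∈ spanF2 v) : (spanF2 v).map ⟨φ, hφ⟩ = spanF2 v := by
  refine Finset.eq_of_subset_of_card_le (fun b hb => ?_) (Finset.card_map _).ge
  obtain ⟨a, ha, rfl⟩ := Finset.mem_map.mp hb
  rw [mem_spanF2] at ha ⊢
  have hspan : Submodule.span (ZMod 2) (Set.range v) ≤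
      (Submodule.span (ZMod 2) (Set.range v)).comap φ :=
    Submodule.span_le.mpr (Set.range_subset_iff.mpr fun i => mem_spanF2.mp (hv i))
  exact hspan ha

end Module

section AlgHom

variable [Algebra (ZMod 2) R] {φ : R →ₐ[ZMod 2] R}

theorem map_dickson (hφ : Function.Injective φ) (hv : ∀ i, φ (v i) ∈ spanF2 v) (i : ℕ) :
    φ (dickson v i) = dickson v i := by
  have hmap : (spanF2 v).val.map φ = (spanF2 v).val :=
    congrArg Finset.val (map_spanF2 (φ := φ.toLinearMap) hφ hv)
  rw [dickson, map_multiset_esymm, hmap]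

theorem map_prodAdd (hφ : Function.Injective φ) (hv : ∀ i, φ (v i) ∈ spanF2 v) {w : R}
    (hw : φ w - w ∈ spanF2 v) : φ (prodAdd v w) = prodAdd v w :=
  calc φ (prodAdd v w) = ∏ α ∈ spanF2 v, (φ w + φ α) := by simp only [prodAdd, map_prod, map_add]
    _ = ∏ β ∈ (spanF2 v).map ⟨φ, hφ⟩, (φ w + β) :=
      (Finset.prod_map (spanF2 v) ⟨φ, hφ⟩ fun β => φ w + β).symm
    _ = prodAdd v (φ w) :=
      congrArg (fun s => ∏ β ∈ s, (φ w + β)) (map_spanF2 (φ := φ.toLinearMap) hφ hv)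
    _ = prodAdd v w := by rw [← prodAdd_add_of_mem hw w, add_sub_cancel]

end AlgHom

theorem mem_spanF2_pair {a x y : R} :
    a ∈ spanF2 ![x, y] ↔ a = 0 ∨ a = x ∨ a = y ∨ a = x + y := by
  classical
  have hsubsets : (Finset.univ : Finset (Finset (Fin 2))) = {∅, {0}, {1}, {0, 1}} := by decide
  simp [spanF2, hsubsets]

end Span

section Pair

variable {R : Type*} [CommRing R] [CharP R 2] {x y : R}

theorem spanF2_pair_val (hx : x ≠ 0) (hy : y ≠ 0) (hxy : x ≠ y) :
    (spanF2 ![x, y]).val = {0, x, y, x + y} := by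
  have hsum : x + y ≠ 0 := fun h => hxy (CharTwo.add_eq_zero.mp h)
  refine (Multiset.Nodup.ext (spanF2 ![x, y]).nodup ?_).mpr fun a => ?_
  · simp [hx, hx.symm, hy, hy.symm, hxy, hsum.symm]
  · simp [mem_spanF2_pair]

theorem card_spanF2_pair (hx : x ≠ 0) (hy : y ≠ 0) (hxy : x ≠ y) :
    (spanF2 ![x, y]).card = 4 := by
  rw [Finset.card_def, spanF2_pair_val hx hy hxy]
  rfl

theorem card_spanF2_pair_erase_zero (hx : x ≠ 0) (hy : y ≠ 0) (hxy : x ≠ y) [DecidableEq R] :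
    ((spanF2 ![x, y]).erase 0).card = 3 := by
  rw [Finset.card_erase_of_mem (by simp [mem_spanF2_pair]), card_spanF2_pair hx hy hxy]

theorem card_spanF2_pair_erase_zero_erase_fst (hx : x ≠ 0) (hy : y ≠ 0) (hxy : x ≠ y)
    [DecidableEq R] : (((spanF2 ![x, y]).erase 0).erase x).card = 2 := by
  rw [Finset.card_erase_of_mem (by simp [mem_spanF2_pair, hx]),
    card_spanF2_pair_erase_zero hx hy hxy]

theorem dickson_pair_one (hx : x ≠ 0) (hy : y ≠ 0) (hxy : x ≠ y) :
    dickson ![x, y] 1 = x ^ 2 + x * y + y ^ 2 := by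
  have h2 : (2 : R) = 0 := CharTwo.two_eq_zero
  have hdickson : dickson ![x, y] 1 = x * (x + y) + (y * (x + y) + x * y) := by
    rw [dickson, spanF2_pair_val hx hy hxy]
    simp [Multiset.esymm, Multiset.powersetCard_cons, Multiset.powersetCard_one]
  rw [hdickson]
  linear_combination x * y * h2

theorem dickson_pair_two (hx : x ≠ 0) (hy : y ≠ 0) (hxy : x ≠ y) :
    dickson ![x, y] 2 = x * y * (x + y) := by
  rw [dickson, spanF2_pair_val hx hy hxy]
  simp [Multiset.esymm, Multiset.powersetCard_cons, Multiset.powersetCard_one, mul_assoc]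

theorem prodAdd_pair (hx : x ≠ 0) (hy : y ≠ 0) (hxy : x ≠ y) (u : R) :
    prodAdd ![x, y] u = u ^ 4 + dickson ![x, y] 1 * u ^ 2 + dickson ![x, y] 2 * u := by
  have h2 : (2 : R) = 0 := CharTwo.two_eq_zero
  have hprod : prodAdd ![x, y] u = u * ((u + x) * ((u + y) * (u + (x + y)))) := by
    simp [prodAdd, Finset.prod, spanF2_pair_val hx hy hxy]
  rw [hprod, dickson_pair_one hx hy hxy, dickson_pair_two hx hy hxy]
  linear_combination (u ^ 3 * (x + y) + u ^ 2 * x * y) * h2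

variable {k : Type*} [CommRing k] [Algebra k R] {u : R}

theorem exists_monic_natDegree_eq_four_of_prodAdd_mem {A : Subalgebra k R} (hx : x ≠ 0)
    (hy : y ≠ 0) (hxy : x ≠ y) (h₁ : dickson ![x, y] 1 ∈ A) (h₂ : dickson ![x, y] 2 ∈ A)
    (hu : prodAdd ![x, y] u ∈ A) :
    ∃ F : Polynomial A, F.Monic ∧ F.natDegree = 4 ∧ Polynomial.aeval u F = 0 := by
  have : Nontrivial R := nontrivial_of_ne x 0 hx
  refine ⟨Polynomial.X ^ 4 + Polynomial.C ⟨_, h₁⟩ * Polynomial.X ^ 2 +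
    Polynomial.C ⟨_, h₂⟩ * Polynomial.X - Polynomial.C ⟨_, hu⟩, by monicity!,
    by compute_degree!, ?_⟩
  simp [Polynomial.aeval_def, prodAdd_pair hx hy hxy]

theorem isIntegral_of_prodAdd_mem {A : Subalgebra k R} (hx : x ≠ 0) (hy : y ≠ 0) (hxy : x ≠ y)
    (h₁ : dickson ![x, y] 1 ∈ A) (h₂ : dickson ![x, y] 2 ∈ A) (hu : prodAdd ![x, y] u ∈ A) :
    IsIntegral A u := by
  obtain ⟨F, hF, -, hFu⟩ := exists_monic_natDegree_eq_four_of_prodAdd_mem hx hy hxy h₁ h₂ hu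
  exact ⟨F, hF, hFu⟩

variable [IsDomain R] {S : Set R} {p : R}

theorem mem_adjoin_of_mem_adjoin_insert_of_translates (hx : x ≠ 0) (hy : y ≠ 0) (hxy : x ≠ y)
    (h₁ : dickson ![x, y] 1 ∈ S) (h₂ : dickson ![x, y] 2 ∈ S) (hu : prodAdd ![x, y] u ∈ S)
    (hp : p ∈ Algebra.adjoin k (insert u S))
    (hfix : ∀ α ∈ spanF2 ![x, y],
      ∃ σ : R →ₐ[k] R, (∀ a ∈ S, σ a = a) ∧ σ u = u + α ∧ σ p = p) :
    p ∈ Algebra.adjoin k S := by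
  obtain ⟨F, hF, hF_deg, hFu⟩ := exists_monic_natDegree_eq_four_of_prodAdd_mem hx hy hxy
    (Algebra.subset_adjoin (R := k) h₁) (Algebra.subset_adjoin h₂) (Algebra.subset_adjoin hu)
  refine mem_adjoin_of_mem_adjoin_insert_of_conjugates
    (s := (spanF2 ![x, y]).map (addLeftEmbedding u)) hF hFu ?_ hp (by simpa using hfix)
  rw [Finset.card_map, card_spanF2_pair hx hy hxy, hF_deg]

theorem mem_adjoin_of_mem_adjoin_insert_snd (hx : x ≠ 0) (hy : y ≠ 0) (hxy : x ≠ y) (hxS : x ∈ S)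
    (h₁ : dickson ![x, y] 1 ∈ S) (hp : p ∈ Algebra.adjoin k (insert y S))
    (hfix : ∀ β ∈ spanF2 ![x, y], β ≠ 0 → β ≠ x →
      ∃ σ : R →ₐ[k] R, (∀ a ∈ S, σ a = a) ∧ σ y = β ∧ σ p = p) :
    p ∈ Algebra.adjoin k S := by
  classical
  have hroot : y ^ 2 + x * y + (x ^ 2 + dickson ![x, y] 1) = 0 := by
    have h2 : (2 : R) = 0 := CharTwo.two_eq_zero
    rw [dickson_pair_one hx hy hxy]
    linear_combination (x ^ 2 + x * y + y ^ 2) * h2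
  have hxA := Algebra.subset_adjoin (R := k) hxS
  have h₁A := Algebra.subset_adjoin (R := k) h₁
  refine mem_adjoin_of_mem_adjoin_insert_of_conjugates (s := ((spanF2 ![x, y]).erase 0).erase x)
    (F := Polynomial.X ^ 2 + Polynomial.C ⟨x, hxA⟩ * Polynomial.X +
      Polynomial.C (⟨x, hxA⟩ ^ 2 + ⟨_, h₁A⟩)) (by monicity!) ?_ ?_ hp fun β hβ => ?_
  · simpa [Polynomial.aeval_def] using hroot
  · rw [card_spanF2_pair_erase_zero_erase_fst hx hy hxy]
    compute_degree!
  · obtain ⟨hβx, hβ0, hβ⟩ : β ≠ x ∧ β ≠ 0 ∧ β ∈ spanF2 ![x, y] := by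
      simpa only [Finset.mem_erase] using hβ
    exact hfix β hβ hβ0 hβx

theorem mem_adjoin_of_mem_adjoin_insert_fst (hx : x ≠ 0) (hy : y ≠ 0) (hxy : x ≠ y)
    (h₁ : dickson ![x, y] 1 ∈ S) (h₂ : dickson ![x, y] 2 ∈ S)
    (hp : p ∈ Algebra.adjoin k (insert x S))
    (hfix : ∀ α ∈ spanF2 ![x, y], α ≠ 0 →
      ∃ σ : R →ₐ[k] R, (∀ a ∈ S, σ a = a) ∧ σ x = α ∧ σ p = p) :
    p ∈ Algebra.adjoin k S := by
  classical
  have hroot : x ^ 3 + dickson ![x, y] 1 * x + dickson ![x, y] 2 = 0 := by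
    have h2 : (2 : R) = 0 := CharTwo.two_eq_zero
    rw [dickson_pair_one hx hy hxy, dickson_pair_two hx hy hxy]
    linear_combination (x ^ 3 + x ^ 2 * y + x * y ^ 2) * h2
  have h₁A := Algebra.subset_adjoin (R := k) h₁
  have h₂A := Algebra.subset_adjoin (R := k) h₂
  refine mem_adjoin_of_mem_adjoin_insert_of_conjugates (s := (spanF2 ![x, y]).erase 0)
    (F := Polynomial.X ^ 3 + Polynomial.C ⟨_, h₁A⟩ * Polynomial.X + Polynomial.C ⟨_, h₂A⟩)
    (by monicity!) ?_ ?_ hp fun α hα => ?_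
  · simpa [Polynomial.aeval_def] using hroot
  · rw [card_spanF2_pair_erase_zero hx hy hxy]
    compute_degree!
  · obtain ⟨hα0, hα⟩ := Finset.mem_erase.mp hα
    exact hfix α hα hα0

end Pair

section MatAct

theorem matAct_comp_matAct (g h : Matrix (Fin 4) (Fin 4) (ZMod 2)) :
    (matAct g).comp (matAct h) = matAct (h * g) := by
  ext i : 1
  simp only [matAct, AlgHom.comp_apply, aeval_X, map_sum, map_mul, algHom_C, algebraMap_eq,
    Finset.mul_sum, Matrix.mul_apply, Finset.sum_mul, ← mul_assoc]
  exact Finset.sum_comm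

theorem matAct_one : matAct 1 = AlgHom.id (ZMod 2) R4 := by
  ext i : 1
  simp [matAct, Matrix.one_apply]

theorem matAct_injective (g : GL (Fin 4) (ZMod 2)) : Function.Injective (matAct g) := by
  refine Function.LeftInverse.injective (g := matAct ↑g⁻¹) fun p => ?_
  rw [← AlgHom.comp_apply, matAct_comp_matAct, ← Units.val_mul, mul_inv_cancel, Units.val_one,
    matAct_one, AlgHom.id_apply]

end MatAct

section SpanXY

theorem xP_ne_zero : xP ≠ 0 := X_ne_zero 0

theorem yP_ne_zero : yP ≠ 0 := X_ne_zero 1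

theorem xP_ne_yP : xP ≠ yP := X_injective.ne (by decide)

theorem zero_mem_spanF2_xP_yP : 0 ∈ spanF2 ![xP, yP] := by simp [mem_spanF2_pair]

theorem xP_mem_spanF2_xP_yP : xP ∈ spanF2 ![xP, yP] := by simp [mem_spanF2_pair]

theorem yP_mem_spanF2_xP_yP : yP ∈ spanF2 ![xP, yP] := by simp [mem_spanF2_pair]

theorem mem_spanF2_xP_yP_iff_exists {α : R4} :
    α ∈ spanF2 ![xP, yP] ↔ ∃ a b : ZMod 2, C a * xP + C b * yP = α := by
  rw [mem_spanF2, Matrix.range_cons, Matrix.range_cons, Matrix.range_empty, Set.union_empty,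
    Set.singleton_union, Submodule.mem_span_pair]
  simp only [smul_eq_C_mul]

end SpanXY

section Group

variable {g : GL (Fin 4) (ZMod 2)}

theorem matAct_mem_spanF2_of_memGL22' (hg : memGL22' g) (i : Fin 2) :
    matAct g (![xP, yP] i) ∈ spanF2 ![xP, yP] := by
  obtain ⟨h02, h03, h12, h13, -⟩ := hg
  rw [mem_spanF2_xP_yP_iff_exists]
  fin_cases i
  · exact ⟨g 0 0, g 0 1, by simp [matAct, xP, yP, Fin.sum_univ_four, h02, h03]⟩
  · exact ⟨g 1 0, g 1 1, by simp [matAct, xP, yP, Fin.sum_univ_four, h12, h13]⟩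

theorem matAct_zP_sub_mem_spanF2_of_memGL22' (hg : memGL22' g) :
    matAct g zP - zP ∈ spanF2 ![xP, yP] := by
  obtain ⟨-, -, -, -, h22, -, h23, -⟩ := hg
  exact mem_spanF2_xP_yP_iff_exists.mpr
    ⟨g 2 0, g 2 1, by simp [matAct, xP, yP, zP, Fin.sum_univ_four, h22, h23]⟩

theorem matAct_wP_sub_mem_spanF2_of_memGL22' (hg : memGL22' g) :
    matAct g wP - wP ∈ spanF2 ![xP, yP] := by
  obtain ⟨-, -, -, -, -, h33, -, h32⟩ := hg
  exact mem_spanF2_xP_yP_iff_exists.mpr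
    ⟨g 3 0, g 3 1, by simp [matAct, xP, yP, wP, Fin.sum_univ_four, h33, h32]⟩

theorem exists_memGL22'_matAct_eq_aeval {α β γ δ : R4} (hα : α ∈ spanF2 ![xP, yP])
    (hβ : β ∈ spanF2 ![xP, yP]) (hα0 : α ≠ 0) (hβ0 : β ≠ 0) (hαβ : α ≠ β)
    (hγ : γ ∈ spanF2 ![xP, yP]) (hδ : δ ∈ spanF2 ![xP, yP]) :
    ∃ g : GL (Fin 4) (ZMod 2), memGL22' g ∧ matAct g = aeval ![α, β, zP + γ, wP + δ] := by
  have det_ne_zero_of_rows : ∀ a b c d : ZMod 2, ¬(a = 0 ∧ b = 0) → ¬(c = 0 ∧ d = 0) →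
      ¬(a = c ∧ b = d) → a * d - b * c ≠ 0 := by decide
  rw [mem_spanF2_xP_yP_iff_exists] at hα hβ hγ hδ
  obtain ⟨a, b, rfl⟩ := hα
  obtain ⟨c, d, rfl⟩ := hβ
  obtain ⟨e, f, rfl⟩ := hγ
  obtain ⟨e', f', rfl⟩ := hδ
  have hblock : a * d - b * c ≠ 0 := by
    refine det_ne_zero_of_rows a b c d ?_ ?_ ?_
    · rintro ⟨rfl, rfl⟩
      simp at hα0
    · rintro ⟨rfl, rfl⟩
      simp at hβ0
    · rintro ⟨rfl, rfl⟩
      exact hαβ rfl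
  let M : Matrix (Fin 4) (Fin 4) (ZMod 2) := !![a, b, 0, 0; c, d, 0, 0; e, f, 1, 0; e', f', 0, 1]
  have hM : M.det ≠ 0 := by
    simpa [M, Matrix.det_succ_row_zero, Fin.sum_univ_succ, Fin.succAbove, sub_eq_add_neg]
      using hblock
  refine ⟨Matrix.GeneralLinearGroup.mkOfDetNeZero M hM,
    ⟨rfl, rfl, rfl, rfl, rfl, rfl, rfl, rfl⟩, ?_⟩
  change matAct M = _
  ext i : 1
  fin_cases i <;> simp [M, matAct, xP, yP, zP, wP, Fin.sum_univ_four] <;> ring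

end Group

section Invariants

/-- The ring of invariants of the group `GL²₂'(𝔽₂)` in `𝔽₂[x, y, z, w]`. -/
def invariantsGL22' : Subalgebra (ZMod 2) R4 :=
  ⨅ (g : GL (Fin 4) (ZMod 2)) (_ : memGL22' g),
    AlgHom.equalizer (matAct g) (AlgHom.id (ZMod 2) R4)

theorem mem_invariantsGL22' {p : R4} :
    p ∈ invariantsGL22' ↔ ∀ g : GL (Fin 4) (ZMod 2), memGL22' g → matAct g p = p := by
  simp only [invariantsGL22', Algebra.mem_iInf, AlgHom.mem_equalizer, AlgHom.id_apply]

theorem aeval_eq_self_of_mem_invariantsGL22' {p α β γ δ : R4} (hp : p ∈ invariantsGL22')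
    (hα : α ∈ spanF2 ![xP, yP]) (hβ : β ∈ spanF2 ![xP, yP]) (hα0 : α ≠ 0) (hβ0 : β ≠ 0)
    (hαβ : α ≠ β) (hγ : γ ∈ spanF2 ![xP, yP]) (hδ : δ ∈ spanF2 ![xP, yP]) :
    aeval ![α, β, zP + γ, wP + δ] p = p := by
  obtain ⟨g, hg, hg_eq⟩ := exists_memGL22'_matAct_eq_aeval hα hβ hα0 hβ0 hαβ hγ hδ
  rw [← hg_eq]
  exact mem_invariantsGL22'.mp hp g hg

/-- The four polynomials `c₂`, `c₃`, `c₄'`, `c₄''`, which generate the ring of invariants of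
`GL²₂'(𝔽₂)`. -/
def generatorsGL22' : Set R4 := {c2, c3, c4', c4''}

theorem c2_mem_generatorsGL22' : c2 ∈ generatorsGL22' := by simp [generatorsGL22']

theorem c3_mem_generatorsGL22' : c3 ∈ generatorsGL22' := by simp [generatorsGL22']

theorem c4'_mem_generatorsGL22' : c4' ∈ generatorsGL22' := by simp [generatorsGL22']

theorem c4''_mem_generatorsGL22' : c4'' ∈ generatorsGL22' := by simp [generatorsGL22']

theorem generatorsGL22'_subset_invariantsGL22' : generatorsGL22' ⊆ invariantsGL22' := by
  intro a ha
  rw [SetLike.mem_coe, mem_invariantsGL22']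
  intro g hg
  have hinj := matAct_injective g
  have hspan := matAct_mem_spanF2_of_memGL22' hg
  obtain rfl | rfl | rfl | rfl := ha
  · exact map_dickson hinj hspan 1
  · exact map_dickson hinj hspan 2
  · exact map_prodAdd hinj hspan (matAct_zP_sub_mem_spanF2_of_memGL22' hg)
  · exact map_prodAdd hinj hspan (matAct_wP_sub_mem_spanF2_of_memGL22' hg)

theorem adjoin_wP_zP_yP_xP_generatorsGL22'_eq_top :
    Algebra.adjoin (ZMod 2) (insert wP (insert zP (insert yP (insert xP generatorsGL22')))) =
      ⊤ := by
  have hX : Set.range (X : Fin 4 → R4) ⊆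
      insert wP (insert zP (insert yP (insert xP generatorsGL22'))) := by
    rintro _ ⟨i, rfl⟩
    fin_cases i <;> simp [xP, yP, zP, wP]
  exact top_le_iff.mp (adjoin_range_X.ge.trans (Algebra.adjoin_mono hX))

theorem invariantsGL22'_le_adjoin_zP_yP_xP_generatorsGL22' :
    invariantsGL22' ≤
      Algebra.adjoin (ZMod 2) (insert zP (insert yP (insert xP generatorsGL22'))) := by
  intro p hp
  have hp_top := adjoin_wP_zP_yP_xP_generatorsGL22'_eq_top.ge (Algebra.mem_top (x := p))
  refine mem_adjoin_of_mem_adjoin_insert_of_translates xP_ne_zero yP_ne_zero xP_ne_yP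
    (.inr <| .inr <| .inr c2_mem_generatorsGL22') (.inr <| .inr <| .inr c3_mem_generatorsGL22')
    (.inr <| .inr <| .inr c4''_mem_generatorsGL22') hp_top fun δ hδ => ?_
  have hσ {a : R4} (ha : a ∈ invariantsGL22') : aeval ![xP, yP, zP + 0, wP + δ] a = a :=
    aeval_eq_self_of_mem_invariantsGL22' ha xP_mem_spanF2_xP_yP yP_mem_spanF2_xP_yP xP_ne_zero
      yP_ne_zero xP_ne_yP zero_mem_spanF2_xP_yP hδ
  refine ⟨aeval ![xP, yP, zP + 0, wP + δ], ?_, by simp [wP], hσ hp⟩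
  rintro a (rfl | rfl | rfl | ha)
  · simp [zP]
  · simp [yP]
  · simp [xP]
  · exact hσ (generatorsGL22'_subset_invariantsGL22' ha)

theorem invariantsGL22'_le_adjoin_yP_xP_generatorsGL22' :
    invariantsGL22' ≤ Algebra.adjoin (ZMod 2) (insert yP (insert xP generatorsGL22')) := by
  intro p hp
  refine mem_adjoin_of_mem_adjoin_insert_of_translates xP_ne_zero yP_ne_zero xP_ne_yP
    (.inr <| .inr c2_mem_generatorsGL22') (.inr <| .inr c3_mem_generatorsGL22')
    (.inr <| .inr c4'_mem_generatorsGL22')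
    (invariantsGL22'_le_adjoin_zP_yP_xP_generatorsGL22' hp) fun γ hγ => ?_
  have hσ {a : R4} (ha : a ∈ invariantsGL22') : aeval ![xP, yP, zP + γ, wP + 0] a = a :=
    aeval_eq_self_of_mem_invariantsGL22' ha xP_mem_spanF2_xP_yP yP_mem_spanF2_xP_yP xP_ne_zero
      yP_ne_zero xP_ne_yP hγ zero_mem_spanF2_xP_yP
  refine ⟨aeval ![xP, yP, zP + γ, wP + 0], ?_, by simp [zP], hσ hp⟩
  rintro a (rfl | rfl | ha)
  · simp [yP]
  · simp [xP]
  · exact hσ (generatorsGL22'_subset_invariantsGL22' ha)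

theorem invariantsGL22'_le_adjoin_xP_generatorsGL22' :
    invariantsGL22' ≤ Algebra.adjoin (ZMod 2) (insert xP generatorsGL22') := by
  intro p hp
  refine mem_adjoin_of_mem_adjoin_insert_snd xP_ne_zero yP_ne_zero xP_ne_yP (.inl rfl)
    (.inr c2_mem_generatorsGL22') (invariantsGL22'_le_adjoin_yP_xP_generatorsGL22' hp)
    fun β hβ hβ0 hβx => ?_
  have hσ {a : R4} (ha : a ∈ invariantsGL22') : aeval ![xP, β, zP + 0, wP + 0] a = a :=
    aeval_eq_self_of_mem_invariantsGL22' ha xP_mem_spanF2_xP_yP hβ xP_ne_zero hβ0 hβx.symm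
      zero_mem_spanF2_xP_yP zero_mem_spanF2_xP_yP
  refine ⟨aeval ![xP, β, zP + 0, wP + 0], ?_, by simp [yP], hσ hp⟩
  rintro a (rfl | ha)
  · simp [xP]
  · exact hσ (generatorsGL22'_subset_invariantsGL22' ha)

theorem invariantsGL22'_le_adjoin_generatorsGL22' :
    invariantsGL22' ≤ Algebra.adjoin (ZMod 2) generatorsGL22' := by
  intro p hp
  refine mem_adjoin_of_mem_adjoin_insert_fst xP_ne_zero yP_ne_zero xP_ne_yP
    c2_mem_generatorsGL22' c3_mem_generatorsGL22'
    (invariantsGL22'_le_adjoin_xP_generatorsGL22' hp) fun α hα hα0 => ?_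
  obtain ⟨β, hβ, hβ0, hαβ⟩ : ∃ β ∈ spanF2 ![xP, yP], β ≠ 0 ∧ α ≠ β := by
    by_cases hαx : α = xP
    · exact ⟨yP, yP_mem_spanF2_xP_yP, yP_ne_zero, hαx ▸ xP_ne_yP⟩
    · exact ⟨xP, xP_mem_spanF2_xP_yP, xP_ne_zero, hαx⟩
  have hσ {a : R4} (ha : a ∈ invariantsGL22') : aeval ![α, β, zP + 0, wP + 0] a = a :=
    aeval_eq_self_of_mem_invariantsGL22' ha hα hβ hα0 hβ0 hαβ zero_mem_spanF2_xP_yP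
      zero_mem_spanF2_xP_yP
  exact ⟨aeval ![α, β, zP + 0, wP + 0],
    fun a ha => hσ (generatorsGL22'_subset_invariantsGL22' ha), by simp [xP], hσ hp⟩

theorem invariantsGL22'_eq_adjoin_generatorsGL22' :
    invariantsGL22' = Algebra.adjoin (ZMod 2) generatorsGL22' :=
  le_antisymm invariantsGL22'_le_adjoin_generatorsGL22'
    (Algebra.adjoin_le generatorsGL22'_subset_invariantsGL22')

theorem isIntegral_X_over_adjoin_generatorsGL22' (i : Fin 4) :
    IsIntegral (Algebra.adjoin (ZMod 2) generatorsGL22') (X i : R4) := by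
  have hint {u : R4} (hu : prodAdd ![xP, yP] u ∈ Algebra.adjoin (ZMod 2) generatorsGL22') :=
    isIntegral_of_prodAdd_mem xP_ne_zero yP_ne_zero xP_ne_yP
      (Algebra.subset_adjoin c2_mem_generatorsGL22')
      (Algebra.subset_adjoin c3_mem_generatorsGL22') hu
  fin_cases i
  · exact hint ((prodAdd_eq_zero_of_mem xP_mem_spanF2_xP_yP).symm ▸ zero_mem _)
  · exact hint ((prodAdd_eq_zero_of_mem yP_mem_spanF2_xP_yP).symm ▸ zero_mem _)
  · exact hint (Algebra.subset_adjoin c4'_mem_generatorsGL22')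
  · exact hint (Algebra.subset_adjoin c4''_mem_generatorsGL22')

theorem algebraicIndependent_c2_c3_c4'_c4'' :
    AlgebraicIndependent (ZMod 2) ![c2, c3, c4', c4''] := by
  have hrange : Set.range ![c2, c3, c4', c4''] = generatorsGL22' := by
    simp only [Matrix.range_cons, Matrix.range_empty, Set.union_empty, Set.singleton_union,
      generatorsGL22']
  refine algebraicIndependent_of_isIntegral_X fun i => ?_
  rw [hrange]
  exact isIntegral_X_over_adjoin_generatorsGL22' i

end Invariants

theorem stmt_9 :
    (∀ p : R4,
        (∀ g : GL (Fin 4) (ZMod 2), memGL22' g →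
            matAct (g : Matrix (Fin 4) (Fin 4) (ZMod 2)) p = p) ↔
          p ∈ Algebra.adjoin (ZMod 2) {c2, c3, c4', c4''}) ∧
    AlgebraicIndependent (ZMod 2) ![c2, c3, c4', c4''] := by
  refine ⟨fun p => ?_, algebraicIndependent_c2_c3_c4'_c4''⟩
  rw [← mem_invariantsGL22', invariantsGL22'_eq_adjoin_generatorsGL22', generatorsGL22']
end
end
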